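/- Assume ν({−1}) = ν({1}) = 0. Define f(t) := (1/(2π)) ∫_{[−1,1]} (1−λ²)/(1+λ²−2λ·cos t) ν(dλ) for t ∈ [0,2π]. Then f is nonnegative with ∫₀^{2π} f(t) dt < ∞, and for every integer n ≥ 0 one has ∫_{[−1,1]} λ^n ν(dλ) = ∫₀^{2π} e^{int} f(t) dt; that is, the spectral distribution function of the stationary sequence is absolutely continuous with spectral density f. -/

import Mathlib

open MeasureTheory Filter Topology Set

/-- The Poisson kernel in real form. -/
noncomputable def pk (l t : ℝ) : ℝ := (1 - l ^ 2) / (1 + l ^ 2 - 2 * l * Real.cos t)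

lemma pk_nonneg {l : ℝ} (hl : l ∈ Set.Icc (-1 : ℝ) 1) (t : ℝ) : 0 ≤ pk l t := by
  obtain ⟨h1, h2⟩ := hl
  apply div_nonneg
  · nlinarith
  · nlinarith [sq_nonneg (l - Real.cos t), Real.cos_sq_le_one t]

lemma pk_cont {l : ℝ} (hl : l ∈ Set.Ioo (-1 : ℝ) 1) : Continuous (pk l) := by
  unfold pk
  refine Continuous.div (by fun_prop) (by fun_prop) (fun t => ?_)
  obtain ⟨h1, h2⟩ := hl
  have h3 : l ^ 2 < 1 := by nlinarith
  have : 0 < 1 + l ^ 2 - 2 * l * Real.cos t := by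
    rcases le_total 0 l with h | h
    · nlinarith [Real.cos_le_one t, mul_pos (sub_pos.2 h2) (sub_pos.2 h2),
        mul_nonneg h (sub_nonneg.2 (Real.cos_le_one t))]
    · nlinarith [Real.neg_one_le_cos t, mul_pos (neg_lt_iff_pos_add.1 h1) (neg_lt_iff_pos_add.1 h1),
        mul_nonneg (neg_nonneg.2 h) (neg_le_iff_add_nonneg.1 (Real.neg_one_le_cos t))]
  exact this.ne'

lemma pk_eq (l t : ℝ) : poissonKernel 0 (l : ℂ) (circleMap 0 1 t) = pk l t := by
  unfold poissonKernel pk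
  have h : ‖(circleMap 0 1 t) - (l : ℂ)‖ ^ 2 = 1 + l ^ 2 - 2 * l * Real.cos t := by
    rw [← Complex.normSq_eq_norm_sq, circleMap, Complex.exp_mul_I, Complex.normSq_apply]
    simp [Complex.cos_ofReal_re, Complex.sin_ofReal_re, Complex.cos_ofReal_im]
    nlinarith [Real.sin_sq_add_cos_sq t]
  simp only [sub_zero, h]
  simp

lemma pk_integral {l : ℝ} (hl : l ∈ Set.Ioo (-1 : ℝ) 1) (n : ℕ) :
    ∫ t in (0:ℝ)..(2 * Real.pi), Complex.exp (Complex.I * n * t) * (pk l t : ℂ)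
      = 2 * Real.pi * (l : ℂ) ^ n := by
  have hd : DiffContOnCl ℂ (fun z : ℂ => z ^ n) (Metric.ball 0 1) :=
    (Differentiable.pow differentiable_id n).diffContOnCl
  have hw : (l : ℂ) ∈ Metric.ball (0 : ℂ) 1 := by
    simpa [abs_lt] using hl
  have h := hd.circleAverage_poissonKernel_smul hw
  rw [Real.circleAverage_def] at h
  rw [← h, Complex.real_smul]
  have hpi : (Real.pi : ℂ) ≠ 0 := by exact_mod_cast Real.pi_ne_zero
  push_cast
  rw [← mul_assoc, mul_inv_cancel₀ (by simpa using hpi), one_mul]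
  refine intervalIntegral.integral_congr (fun t _ => ?_)
  simp only [Pi.smul_apply', pk_eq, Complex.real_smul]
  rw [mul_comm, circleMap]
  congr 1
  simp only [Complex.ofReal_one, one_mul, zero_add]
  rw [← Complex.exp_nat_mul]
  congr 1
  ring

lemma pk_integral_real {l : ℝ} (hl : l ∈ Set.Ioo (-1 : ℝ) 1) :
    ∫ t in (0:ℝ)..(2 * Real.pi), pk l t = 2 * Real.pi := by
  have h := pk_integral hl 0
  simp only [Nat.cast_zero, mul_zero, zero_mul, Complex.exp_zero, one_mul, pow_zero, mul_one] at h
  rw [intervalIntegral.integral_ofReal] at h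
  exact_mod_cast h

/-- **Spectral density for reversible chains (part of Corollary 2.3).**
Let `ν` be a finite positive Borel measure on `[-1,1]` with no atoms at `±1`
(the transition spectral measure of a reversible Markov chain).  Then
`f(t) = (1/(2π)) ∫ (1-λ²)/(1+λ²-2λcos t) ν(dλ)` is nonnegative and
integrable on `[0,2π]` and `∫ λⁿ ν(dλ) = ∫₀^{2π} e^{int} f(t) dt` for all
`n ≥ 0`, i.e. the spectral distribution function is absolutely continuous with
density `f`. -/
theorem reversible_spectral_density
    (ν : Measure ℝ) [IsFiniteMeasure ν]
    (hsupp : ν (Set.Icc (-1 : ℝ) 1)ᶜ = 0)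
    (hm1 : ν {(-1 : ℝ)} = 0) (h1 : ν {(1 : ℝ)} = 0)
    (f : ℝ → ℝ)
    (hf : ∀ t : ℝ, f t = (1 / (2 * Real.pi)) *
      ∫ l in Set.Icc (-1 : ℝ) 1, (1 - l ^ 2) / (1 + l ^ 2 - 2 * l * Real.cos t) ∂ν) :
    (∀ t : ℝ, 0 ≤ f t) ∧
    IntegrableOn f (Set.Ioc 0 (2 * Real.pi)) ∧
    ∀ n : ℕ,
      ((∫ l in Set.Icc (-1 : ℝ) 1, l ^ n ∂ν : ℝ) : ℂ) =
        ∫ t in (0:ℝ)..(2 * Real.pi), Complex.exp (Complex.I * n * t) * (f t : ℂ) := by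
  have hpi : (0 : ℝ) ≤ 2 * Real.pi := by positivity
  have hfp : ∀ t, f t = (1 / (2 * Real.pi)) * ∫ l in Set.Icc (-1 : ℝ) 1, pk l t ∂ν := hf
  have hae : ∀ᵐ l ∂(ν.restrict (Set.Icc (-1 : ℝ) 1)), l ∈ Set.Ioo (-1 : ℝ) 1 := by
    have a1 : ∀ᵐ l ∂ν, l ≠ -1 := by simpa [ae_iff] using hm1
    have a2 : ∀ᵐ l ∂ν, l ≠ 1 := by simpa [ae_iff] using h1
    filter_upwards [ae_restrict_mem measurableSet_Icc, ae_restrict_of_ae a1, ae_restrict_of_ae a2]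
      with l h h' h''
    exact ⟨lt_of_le_of_ne h.1 h'.symm, lt_of_le_of_ne h.2 h''⟩
  set μ := ν.restrict (Set.Icc (-1 : ℝ) 1) with hμ
  have hmeas : Measurable (Function.uncurry pk) := by
    unfold pk Function.uncurry
    fun_prop
  have hint : Integrable (Function.uncurry pk)
      (μ.prod (volume.restrict (Set.Ioc 0 (2 * Real.pi)))) := by
    rw [integrable_prod_iff hmeas.aestronglyMeasurable]
    refine ⟨?_, ?_⟩
    · filter_upwards [hae] with l hl
      exact ((pk_cont hl).intervalIntegrable 0 (2 * Real.pi)).1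
    · refine (integrable_const (2 * Real.pi)).congr ?_
      filter_upwards [hae] with l hl
      refine (pk_integral_real hl).symm.trans ?_
      rw [intervalIntegral.integral_of_le hpi]
      refine integral_congr_ae (Eventually.of_forall fun t => ?_)
      exact (Real.norm_of_nonneg (pk_nonneg (Ioo_subset_Icc_self hl) t)).symm
  refine ⟨fun t => ?_, ?_, fun n => ?_⟩
  · rw [hfp]
    refine mul_nonneg (by positivity) (integral_nonneg_of_ae ?_)
    filter_upwards [hae] with l hl
    exact pk_nonneg (Ioo_subset_Icc_self hl) t
  · have : f = fun t => (1 / (2 * Real.pi)) * ∫ l, pk l t ∂μ := funext hfp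
    rw [this]
    have h2 : Integrable (fun t => ∫ l, pk l t ∂μ) (volume.restrict (Set.Ioc 0 (2 * Real.pi))) :=
      hint.integral_prod_right
    exact h2.const_mul _
  · have hint2 : Integrable (Function.uncurry fun (l t : ℝ) =>
        Complex.exp (Complex.I * n * t) * (pk l t : ℂ))
        (μ.prod (volume.restrict (Set.Ioc 0 (2 * Real.pi)))) := by
      refine hint.mono ?_ (Eventually.of_forall fun p => ?_)
      · have h2 : Measurable fun p : ℝ × ℝ => ((pk p.1 p.2 : ℝ) : ℂ) :=
          Complex.measurable_ofReal.comp hmeas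
        have h3 : Measurable fun p : ℝ × ℝ => Complex.exp (Complex.I * n * p.2) := by fun_prop
        exact (h3.mul h2).aestronglyMeasurable
      · have : Complex.I * n * (p.2 : ℂ) = ((n * p.2 : ℝ) : ℂ) * Complex.I := by
          push_cast; ring
        simp only [Function.uncurry, norm_mul, this, Complex.norm_exp_ofReal_mul_I, one_mul,
          Complex.norm_real, le_refl]
    have hsw := integral_integral_swap hint2
    have hL : ∫ l, (∫ t in Set.Ioc 0 (2 * Real.pi),
        Complex.exp (Complex.I * n * t) * (pk l t : ℂ)) ∂μ
        = 2 * Real.pi * ((∫ l, l ^ n ∂μ : ℝ) : ℂ) := by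
      rw [← integral_complex_ofReal, ← integral_const_mul]
      refine integral_congr_ae ?_
      filter_upwards [hae] with l hl
      rw [← intervalIntegral.integral_of_le hpi, pk_integral hl n]
      push_cast; rfl
    rw [hL] at hsw
    have hpc : (2 * Real.pi : ℂ) ≠ 0 := by
      exact_mod_cast (by positivity : (2 * Real.pi : ℝ) ≠ 0)
    apply mul_left_cancel₀ hpc
    rw [hsw, intervalIntegral.integral_of_le hpi, ← integral_const_mul]
    refine integral_congr_ae (Eventually.of_forall fun t => ?_)
    simp only [hfp]
    rw [integral_const_mul, integral_complex_ofReal]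
    push_cast
    field_simp
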